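/- arXiv:2207.03594 — 4 statements merged into one kernel-verified Lean document; each statement's English description precedes it below -/
import Mathlib

section
/- Let A = {t_0 < t_1 < ... < t_{q-1}} be a σ_d-rotational set with rotation number p/q, i.e. σ_d(t_i) = t_{i+p} for all i (indices mod q). Then: (1) A is the union of exactly n = gcd(p,q) distinct orbits under σ_d, each of size q/n; (2) each of these orbits is itself a σ_d-rotational set with rotation number p/q (that is, with rotation number (p/n)/(q/n)); (3) the orbits are interlaced, meaning: for any n consecutive elements t_a, t_{a+1}, ..., t_{a+n-1} of A (indices mod q), no two of these elements belong to the same orbit. -/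
/-- The angle-multiplying map `σ_d : 𝕋 → 𝕋`, where the circle `𝕋 = ℝ/ℤ` is identified with
the set of representatives `[0,1) ⊆ ℝ` (and so ordered by comparing these representatives). -/
noncomputable def sigmad (d : ℕ) (t : ℝ) : ℝ := Int.fract (d * t)

/-- The orbit of a point of the circle under `σ_d`. -/
def sigmaOrbit (d : ℕ) (t : ℝ) : Set ℝ := {s | ∃ k : ℕ, (sigmad d)^[k] t = s}

/-- `t : ZMod q → ℝ` lists (with indices viewed in `ℤ/qℤ`) the elements
`t 0 < t 1 < ⋯ < t (q-1)` of a `σ_d`-rotational set with rotation number `p/q`: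
the points lie on the circle (representatives in `[0,1)`), are indexed in increasing
order, `p ≠ 0`, and `σ_d (t i) = t (i + p)` for all `i`. -/
def IsRotational (d q : ℕ) (p : ZMod q) (t : ZMod q → ℝ) : Prop :=
  (∀ i, t i ∈ Set.Ico (0:ℝ) 1) ∧
  (∀ i j : ZMod q, i.val < j.val → t i < t j) ∧
  p ≠ 0 ∧
  ∀ i, sigmad d (t i) = t (i + p)

/-!
Along the enumeration `t`, the map `f` becomes the translation `i ↦ i + p` of `ℤ/qℤ`, whose orbits
are the cosets of the subgroup generated by `p`. With `n = gcd(p, q)`, these cosets are the `n`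
residue classes modulo `n`, so any `n` consecutive indices lie in `n` different orbits. Each class
is listed in increasing order as `a, a + n, a + 2n, …`, and in this listing adding `p` shifts the
position by `p / n`.
-/

section ForwardOrbit

variable {α β : Type*} {f : α → α} {g : β → β} {t : β → α}

/-- The forward orbit of `x` under a self-map `f`, which is `sigmaOrbit d x` for `f = sigmad d`. -/
def forwardOrbit (f : α → α) (x : α) : Set α := {y | ∃ k : ℕ, f^[k] x = y}

theorem mem_forwardOrbit_self (f : α → α) (x : α) : x ∈ forwardOrbit f x := ⟨0, rfl⟩

theorem forwardOrbit_eq_image_of_semiconj (h : Function.Semiconj t g f) (x : β) :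
    forwardOrbit f (t x) = t '' forwardOrbit g x := by
  ext y
  simp only [forwardOrbit, Set.mem_ofPred_eq, Set.mem_image, exists_exists_eq_and,
    (h.iterate_right _).eq]

end ForwardOrbit

section ResidueClass

variable {n m q : ℕ}

/-- The residue class in `ℤ/qℤ` of the elements congruent to `a` modulo a divisor `n` of `q`. -/
def residueClass (h : n ∣ q) (a : ZMod n) : Set (ZMod q) := ZMod.castHom h (ZMod n) ⁻¹' {a}

theorem residueClass_injective (h : n ∣ q) : Function.Injective (residueClass h) :=
  (ZMod.castHom_surjective h).preimage_injective.comp Set.singleton_injective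

/-- The enumeration `a, a + n, a + 2n, …` of the residue class of `a` modulo `n` in `ℤ/qℤ`, indexed
by `ℤ/mℤ` where `n * m = q`; here `a` is represented in `{0, …, n - 1}`. -/
def residueClassEnum (q : ℕ) (a : ZMod n) (c : ZMod m) : ZMod q := (a.val + n * c.val : ℕ)

theorem val_residueClassEnum [NeZero n] [NeZero m] (h : n * m = q) (a : ZMod n) (c : ZMod m) :
    (residueClassEnum q a c).val = a.val + n * c.val := by
  refine ZMod.val_natCast_of_lt ?_
  calc a.val + n * c.val < n + n * c.val := by gcongr; exact a.val_lt
    _ = n * (c.val + 1) := by ring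
    _ ≤ n * m := by gcongr; exact c.val_lt
    _ = q := h

theorem residueClassEnum_add_natCast [NeZero m] (h : n * m = q) (a : ZMod n) (c : ZMod m) (k : ℕ) :
    residueClassEnum q a (c + (k : ZMod m)) = residueClassEnum q a c + (n * k : ℕ) := by
  have hval : (c + (k : ZMod m)).val ≡ c.val + k [MOD m] := by
    simp [← ZMod.natCast_eq_natCast_iff]
  simp only [residueClassEnum, ← Nat.cast_add, add_assoc, ← mul_add]
  rw [ZMod.natCast_eq_natCast_iff, ← h]
  exact (hval.mul_left' n).add_left a.val

theorem range_residueClassEnum [NeZero n] [NeZero q] (h : n * m = q) (a : ZMod n) :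
    Set.range (residueClassEnum q a : ZMod m → ZMod q) =
      residueClass (Dvd.intro m h) a := by
  ext j
  constructor
  · rintro ⟨c, rfl⟩
    simp [residueClass, residueClassEnum, -ZMod.castHom_apply]
  · rintro rfl
    have hdiv : j.val / n < m := Nat.div_lt_of_lt_mul (h ▸ j.val_lt)
    have hmod : (ZMod.castHom (Dvd.intro m h) (ZMod n) j).val = j.val % n := by
      rw [ZMod.castHom_apply, ← ZMod.natCast_val, ZMod.val_natCast]
    refine ⟨(j.val / n : ℕ), ?_⟩
    rw [residueClassEnum, hmod, ZMod.val_natCast_of_lt hdiv, Nat.mod_add_div,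
      ZMod.natCast_zmod_val]

theorem mem_multiples_iff_castHom_gcd_eq_zero [NeZero q] (p j : ZMod q) :
    j ∈ AddSubmonoid.multiples p ↔
      ZMod.castHom (Nat.gcd_dvd_right p.val q) (ZMod (Nat.gcd p.val q)) j = 0 := by
  rw [mem_multiples_iff_mem_zmultiples, AddSubgroup.mem_zmultiples_iff, ZMod.castHom_apply,
    ← ZMod.natCast_val, ZMod.natCast_eq_zero_iff, ← Int.gcd_natCast_natCast, Int.gcd_dvd_iff]
  constructor
  · rintro ⟨x, rfl⟩
    have hval : ((x * p.val : ℤ) : ZMod q) = (((x • p).val : ℤ) : ZMod q) := by simp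
    obtain ⟨y, hy⟩ := (ZMod.intCast_eq_intCast_iff_dvd_sub _ _ _).1 hval
    exact ⟨x, y, by linear_combination hy⟩
  · rintro ⟨x, y, hxy⟩
    refine ⟨x, ?_⟩
    have hcast := congrArg (Int.cast : ℤ → ZMod q) hxy
    simpa [mul_comm] using hcast.symm

theorem forwardOrbit_add_right [NeZero q] (p i : ZMod q) :
    forwardOrbit (· + p) i =
      residueClass (Nat.gcd_dvd_right p.val q) (ZMod.castHom (Nat.gcd_dvd_right p.val q) _ i) := by
  ext j
  have hmem : j ∈ forwardOrbit (· + p) i ↔ j - i ∈ AddSubmonoid.multiples p := by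
    simp only [forwardOrbit, Set.mem_ofPred_eq, add_right_iterate_apply,
      AddSubmonoid.mem_multiples_iff, eq_sub_iff_add_eq']
  rw [hmem, mem_multiples_iff_castHom_gcd_eq_zero, map_sub, sub_eq_zero]
  rfl

end ResidueClass

/-- `t` lists in increasing order (indices represented in `{0, …, q - 1}`) a subset of `S` on which
`f` acts as the nontrivial rotation of indices by `p`. For `f = sigmad d` and `S = [0, 1)` this is
`IsRotational d q p t` by definition. -/
def IsRotationalOn {α : Type*} [Preorder α] (f : α → α) (S : Set α) (q : ℕ) (p : ZMod q)
    (t : ZMod q → α) : Prop :=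
  (∀ i, t i ∈ S) ∧ (∀ i j : ZMod q, i.val < j.val → t i < t j) ∧ p ≠ 0 ∧ ∀ i, f (t i) = t (i + p)

namespace IsRotationalOn

variable {α : Type*} [Preorder α] {f : α → α} {S : Set α} {q : ℕ} {p : ZMod q} {t : ZMod q → α}

theorem comp_residueClassEnum (h : IsRotationalOn f S q p t) {n m k : ℕ} [NeZero n] [NeZero m]
    (hq : n * m = q) (hp : ((n * k : ℕ) : ZMod q) = p) (a : ZMod n) :
    IsRotationalOn f S m k (t ∘ residueClassEnum q a) := by
  obtain ⟨hS, hlt, hp0, hf⟩ := h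
  have hshift (c : ZMod m) : residueClassEnum q a (c + (k : ZMod m)) =
      residueClassEnum q a c + p := by
    rw [residueClassEnum_add_natCast hq, hp]
  refine ⟨fun c => hS _, fun c c' hc => hlt _ _ ?_, fun hk => hp0 ?_, fun c => ?_⟩
  · rw [val_residueClassEnum hq, val_residueClassEnum hq]
    gcongr
    exact NeZero.pos n
  · simpa only [hk, add_zero, left_eq_add] using hshift 0
  · rw [Function.comp_apply, hf, Function.comp_apply, hshift]

variable [NeZero q]

theorem injective (h : IsRotationalOn f S q p t) : Function.Injective t := by
  obtain ⟨-, hlt, -, -⟩ := h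
  intro i j hij
  rcases lt_trichotomy i.val j.val with hv | hv | hv
  · exact absurd hij (hlt _ _ hv).ne
  · exact ZMod.val_injective q hv
  · exact absurd hij (hlt _ _ hv).ne'

theorem ncard_range (h : IsRotationalOn f S q p t) : (Set.range t).ncard = q := by
  rw [Set.ncard_range_of_injective h.injective, Nat.card_zmod]

theorem forwardOrbit_eq_image (h : IsRotationalOn f S q p t) (i : ZMod q) :
    forwardOrbit f (t i) =
      t '' residueClass (Nat.gcd_dvd_right p.val q)
        (ZMod.castHom (Nat.gcd_dvd_right p.val q) _ i) := by
  obtain ⟨-, -, -, hf⟩ := h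
  rw [forwardOrbit_eq_image_of_semiconj (fun j => (hf j).symm), forwardOrbit_add_right]

theorem image_residueClass_injective (h : IsRotationalOn f S q p t) {n : ℕ} (hn : n ∣ q) :
    Function.Injective (fun a : ZMod n => t '' residueClass hn a) :=
  h.injective.image_injective.comp (residueClass_injective hn)

theorem setOf_forwardOrbit_eq_range (h : IsRotationalOn f S q p t) :
    {O | ∃ x ∈ Set.range t, O = forwardOrbit f x} =
      Set.range (fun a => t '' residueClass (Nat.gcd_dvd_right p.val q) a) := by
  rw [← (ZMod.castHom_surjective (Nat.gcd_dvd_right p.val q)).range_comp]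
  ext O
  simp only [Set.exists_range_iff, Set.mem_ofPred_eq, h.forwardOrbit_eq_image, @eq_comm _ O]
  rfl

theorem ncard_setOf_forwardOrbit (h : IsRotationalOn f S q p t) :
    {O | ∃ x ∈ Set.range t, O = forwardOrbit f x}.ncard = Nat.gcd p.val q := by
  rw [h.setOf_forwardOrbit_eq_range,
    Set.ncard_range_of_injective (h.image_residueClass_injective _), Nat.card_zmod]

theorem sUnion_forwardOrbit (h : IsRotationalOn f S q p t) :
    ⋃₀ {O | ∃ x ∈ Set.range t, O = forwardOrbit f x} = Set.range t := by
  apply Set.Subset.antisymm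
  · rintro x ⟨_, ⟨_, ⟨i, rfl⟩, rfl⟩, hx⟩
    rw [h.forwardOrbit_eq_image] at hx
    exact Set.image_subset_range _ _ hx
  · exact fun x hx => ⟨_, ⟨x, hx, rfl⟩, mem_forwardOrbit_self f x⟩

theorem exists_range_eq_image_residueClass (h : IsRotationalOn f S q p t)
    (a : ZMod (Nat.gcd p.val q)) :
    ∃ u : ZMod (q / Nat.gcd p.val q) → α,
      Set.range u = t '' residueClass (Nat.gcd_dvd_right p.val q) a ∧
      IsRotationalOn f S (q / Nat.gcd p.val q) (p.val / Nat.gcd p.val q : ℕ) u := by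
  have hn : NeZero (Nat.gcd p.val q) := ⟨Nat.gcd_ne_zero_right (NeZero.ne q)⟩
  have hm : NeZero (q / Nat.gcd p.val q) :=
    ⟨(Nat.div_gcd_pos_of_pos_right _ (NeZero.pos q)).ne'⟩
  have hq : Nat.gcd p.val q * (q / Nat.gcd p.val q) = q :=
    Nat.mul_div_cancel' (Nat.gcd_dvd_right _ _)
  have hp : ((Nat.gcd p.val q * (p.val / Nat.gcd p.val q) : ℕ) : ZMod q) = p := by
    rw [Nat.mul_div_cancel' (Nat.gcd_dvd_left _ _), ZMod.natCast_zmod_val]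
  refine ⟨t ∘ residueClassEnum q a, ?_, h.comp_residueClassEnum hq hp a⟩
  rw [Set.range_comp, range_residueClassEnum hq]

theorem forwardOrbit_add_natCast_ne (h : IsRotationalOn f S q p t) (i : ZMod q) {k l : ℕ}
    (hk : k < Nat.gcd p.val q) (hl : l < Nat.gcd p.val q) (hkl : k ≠ l) :
    forwardOrbit f (t (i + k)) ≠ forwardOrbit f (t (i + l)) := by
  intro horb
  rw [h.forwardOrbit_eq_image, h.forwardOrbit_eq_image] at horb
  have hcast := h.image_residueClass_injective _ horb
  rw [map_add, map_add, add_right_inj, map_natCast, map_natCast, ZMod.natCast_eq_natCast_iff]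
    at hcast
  exact hkl (hcast.eq_of_lt_of_lt hk hl)

end IsRotationalOn

theorem stmt0_general {α : Type*} [Preorder α] {f : α → α} {S : Set α} {q : ℕ} [NeZero q]
    {p : ZMod q} {t : ZMod q → α} (h : IsRotationalOn f S q p t) :
    {O | ∃ x ∈ Set.range t, O = forwardOrbit f x}.ncard = Nat.gcd p.val q ∧
    ⋃₀ {O | ∃ x ∈ Set.range t, O = forwardOrbit f x} = Set.range t ∧
    (∀ O ∈ {O | ∃ x ∈ Set.range t, O = forwardOrbit f x},
      O.ncard = q / Nat.gcd p.val q ∧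
      ∃ u : ZMod (q / Nat.gcd p.val q) → α, Set.range u = O ∧
        IsRotationalOn f S (q / Nat.gcd p.val q) (p.val / Nat.gcd p.val q : ℕ) u) ∧
    (∀ (i : ZMod q) (k l : ℕ), k < Nat.gcd p.val q → l < Nat.gcd p.val q → k ≠ l →
      forwardOrbit f (t (i + k)) ≠ forwardOrbit f (t (i + l))) := by
  refine ⟨h.ncard_setOf_forwardOrbit, h.sUnion_forwardOrbit, ?_,
    fun i _ _ => h.forwardOrbit_add_natCast_ne i⟩
  rw [h.setOf_forwardOrbit_eq_range, Set.forall_mem_range]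
  intro a
  obtain ⟨u, hu, hrot⟩ := h.exists_range_eq_image_residueClass a
  have hm : NeZero (q / Nat.gcd p.val q) :=
    ⟨(Nat.div_gcd_pos_of_pos_right _ (NeZero.pos q)).ne'⟩
  exact ⟨hu ▸ hrot.ncard_range, u, hu, hrot⟩

theorem stmt0 (d q : ℕ) (hd : 2 ≤ d) (hq : 1 ≤ q) (p : ZMod q)
    (t : ZMod q → ℝ) (h : IsRotational d q p t) :
    -- (1) `A = range t` is the union of exactly `n = gcd(p,q)` distinct orbits …
    {O : Set ℝ | ∃ x ∈ Set.range t, O = sigmaOrbit d x}.ncard = Nat.gcd p.val q ∧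
    ⋃₀ {O : Set ℝ | ∃ x ∈ Set.range t, O = sigmaOrbit d x} = Set.range t ∧
    -- … each of size `q/n`, and (2) each orbit is `σ_d`-rotational with
    -- rotation number `(p/n)/(q/n)`
    (∀ O ∈ {O : Set ℝ | ∃ x ∈ Set.range t, O = sigmaOrbit d x},
      O.ncard = q / Nat.gcd p.val q ∧
      ∃ u : ZMod (q / Nat.gcd p.val q) → ℝ, Set.range u = O ∧
        IsRotational d (q / Nat.gcd p.val q)
          ((p.val / Nat.gcd p.val q : ℕ) : ZMod (q / Nat.gcd p.val q)) u) ∧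
    -- (3) the orbits are interlaced: among any `n` consecutive elements of `A`,
    -- no two belong to the same orbit
    (∀ (i : ZMod q) (k l : ℕ), k < Nat.gcd p.val q → l < Nat.gcd p.val q → k ≠ l →
      sigmaOrbit d (t (i + (k : ZMod q))) ≠ sigmaOrbit d (t (i + (l : ZMod q)))) := by
  have : NeZero q := ⟨Nat.one_le_iff_ne_zero.1 hq⟩
  exact stmt0_general h
end

section
/- Let s = (a_0, a_1, ..., a_{q-1}) and t = (b_0, b_1, ..., b_{q-1}) be distinct points of T (given as q-tuples of digits in {0, ..., d−1}) such that the orbit of s and the orbit of t under σ_d are each σ_d-rotational sets. Then a_0 < b_0 if and only if there exists r ∈ T with s < r < t and σ_d(r) = 0. -/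
/-- A subset of the circle is a `σ_d`-rotational set if it can be listed in increasing
order as `t_0 < t_1 < ⋯ < t_{q-1}` with `σ_d(t_i) = t_{i+p}` for some `p ≠ 0` in `ℤ/qℤ`. -/
def IsRotationalSet (d : ℕ) (A : Set ℝ) : Prop :=
  ∃ (q : ℕ) (p : ZMod q) (t : ZMod q → ℝ), Set.range t = A ∧ IsRotational d q p t

/-- The point of the circle with repeating base-`d` expansion `0.‾(a_0 a_1 … a_{q-1})`. -/
noncomputable def tuplePoint (d q : ℕ) (a : ZMod q → ℕ) : ℝ :=
  Int.fract ((∑ i ∈ Finset.range q, (a (i : ZMod q) : ℝ) * (d : ℝ) ^ (q - 1 - i)) /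
    ((d : ℝ) ^ q - 1))

/-!
Multiplying `x = 0.‾(a_0 a_1 … a_{q-1})` by `d` gives `a_0 + 0.‾(a_1 … a_{q-1} a_0)`, so the first
digit is `⌊d x⌋` unless every digit is `d - 1`; that tuple represents the fixed point `0` of `σ_d`,
which lies in no rotational set. A zero of `σ_d` strictly between `s` and `t` is an `m / d` with `m`
an integer strictly between `d s` and `d t`, so it exists if and only if `⌊d s⌋ + 1 < d t`. If
`0 < b_0`, then `d t` is strictly larger than its integer part `b_0`, and the last condition becomes
`a_0 < b_0`.
-/

theorem mul_sum_mul_pow_add {R : Type*} [CommSemiring R] (f : ℕ → R) (x : R) (n : ℕ) :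
    x * ∑ i ∈ Finset.range n, f i * x ^ (n - 1 - i) + f n =
      f 0 * x ^ n + ∑ i ∈ Finset.range n, f (i + 1) * x ^ (n - 1 - i) := by
  calc
    _ = ∑ i ∈ Finset.range (n + 1), f i * x ^ (n - i) := by
      rw [Finset.sum_range_succ, Finset.mul_sum, Nat.sub_self, pow_zero, mul_one]
      refine congrArg (· + f n) (Finset.sum_congr rfl fun i hi ↦ ?_)
      have hexp : n - i = n - 1 - i + 1 := by have := Finset.mem_range.1 hi; omega
      rw [hexp, pow_succ', mul_left_comm]
    _ = _ := by
      rw [Finset.sum_range_succ', add_comm]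
      simp only [Nat.sub_zero, Nat.sub_sub, Nat.add_comm 1]

/-- The real number `0.‾(a_0 a_1 … a_{q-1})` in base `d`, not reduced modulo `1`. For digits below
`d` it differs from `tuplePoint` only when all digits are `d - 1`, where it is `1` instead of `0`. -/
noncomputable def tupleValue (d q : ℕ) (a : ZMod q → ℕ) : ℝ :=
  (∑ i ∈ Finset.range q, (a (i : ZMod q) : ℝ) * (d : ℝ) ^ (q - 1 - i)) / ((d : ℝ) ^ q - 1)

section TupleValue

variable {d q : ℕ}

theorem pow_sub_one_pos [NeZero q] (hd : 1 < d) : (0 : ℝ) < (d : ℝ) ^ q - 1 :=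
  sub_pos.2 (one_lt_pow₀ (Nat.one_lt_cast.2 hd) (NeZero.ne q))

theorem tupleValue_strictMono [NeZero q] (hd : 1 < d) : StrictMono (tupleValue d q) := by
  intro a b hab
  obtain ⟨hle, i, hi⟩ := Pi.lt_def.1 hab
  refine div_lt_div_of_pos_right (Finset.sum_lt_sum (fun j _ ↦ ?_) ⟨i.val, ?_, ?_⟩)
    (pow_sub_one_pos hd)
  · gcongr
    exact hle j
  · exact Finset.mem_range.2 (ZMod.val_lt i)
  · rw [ZMod.natCast_zmod_val]
    gcongr

theorem tupleValue_const [NeZero q] (hd : 1 < d) (c : ℕ) :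
    tupleValue d q (fun _ ↦ c) = c / (d - 1) := by
  have hd1 : (d : ℝ) - 1 ≠ 0 := (sub_pos.2 (Nat.one_lt_cast.2 hd)).ne'
  rw [tupleValue, ← Finset.mul_sum, Finset.sum_range_reflect (fun i ↦ (d : ℝ) ^ i) q,
    div_eq_div_iff (pow_sub_one_pos hd).ne' hd1, mul_assoc, geom_sum_mul]

theorem tupleValue_zero [NeZero q] (hd : 1 < d) : tupleValue d q 0 = 0 := by
  exact (tupleValue_const hd 0).trans (by rw [Nat.cast_zero, zero_div])

theorem tupleValue_const_pred [NeZero q] (hd : 1 < d) :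
    tupleValue d q (fun _ ↦ d - 1) = 1 := by
  rw [tupleValue_const hd, Nat.cast_pred (by omega),
    div_self (sub_pos.2 (Nat.one_lt_cast.2 hd)).ne']

theorem tupleValue_nonneg [NeZero q] (hd : 1 < d) (a : ZMod q → ℕ) : 0 ≤ tupleValue d q a :=
  (tupleValue_zero hd).symm.trans_le ((tupleValue_strictMono hd).monotone zero_le)

theorem tupleValue_pos [NeZero q] (hd : 1 < d) {a : ZMod q → ℕ} (ha : a ≠ 0) :
    0 < tupleValue d q a :=
  (tupleValue_zero hd).symm.trans_lt (tupleValue_strictMono hd (pos_iff_ne_zero.2 ha))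

theorem tupleValue_lt_one [NeZero q] {a : ZMod q → ℕ} (ha : ∀ i, a i < d)
    (ha' : ∃ i, a i + 1 < d) : tupleValue d q a < 1 := by
  obtain ⟨i, hi⟩ := ha'
  have hd : 1 < d := by omega
  rw [← tupleValue_const_pred (q := q) hd]
  exact tupleValue_strictMono hd
    (Pi.lt_def.2 ⟨fun j ↦ Nat.le_sub_one_of_lt (ha j), i, Nat.lt_sub_of_add_lt hi⟩)

theorem natCast_mul_tupleValue [NeZero q] (hd : 1 < d) (a : ZMod q → ℕ) :
    d * tupleValue d q a = a 0 + tupleValue d q (fun i ↦ a (i + 1)) := by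
  have hD : (d : ℝ) ^ q - 1 ≠ 0 := (pow_sub_one_pos hd).ne'
  have hshift := mul_sum_mul_pow_add (fun i ↦ (a (i : ZMod q) : ℝ)) (d : ℝ) q
  simp only [ZMod.natCast_self, Nat.cast_zero, Nat.cast_add, Nat.cast_one] at hshift
  rw [tupleValue, tupleValue, mul_div_assoc', div_eq_iff hD, add_mul, div_mul_cancel₀ _ hD]
  linarith

theorem tuplePoint_eq_tupleValue [NeZero q] {a : ZMod q → ℕ} (ha : ∀ i, a i < d)
    (ha' : ∃ i, a i + 1 < d) : tuplePoint d q a = tupleValue d q a :=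
  Int.fract_eq_self.2
    ⟨tupleValue_nonneg (by obtain ⟨i, hi⟩ := ha'; omega) a, tupleValue_lt_one ha ha'⟩

theorem floor_natCast_mul_tupleValue [NeZero q] {a : ZMod q → ℕ} (ha : ∀ i, a i < d)
    (ha' : ∃ i, a i + 1 < d) : ⌊d * tupleValue d q a⌋ = a 0 := by
  obtain ⟨i, hi⟩ := ha'
  have hd : 1 < d := by omega
  have hshift : ∃ j, a (j + 1) + 1 < d := ⟨i - 1, by rwa [sub_add_cancel]⟩
  rw [natCast_mul_tupleValue hd, Int.floor_natCast_add,
    Int.floor_eq_zero_iff.2 ⟨tupleValue_nonneg hd _, tupleValue_lt_one (fun j ↦ ha _) hshift⟩,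
    add_zero]

theorem natCast_lt_natCast_mul_tupleValue [NeZero q] (hd : 1 < d) {a : ZMod q → ℕ}
    (ha : a 0 ≠ 0) : a 0 < d * tupleValue d q a := by
  rw [natCast_mul_tupleValue hd, lt_add_iff_pos_right]
  refine tupleValue_pos hd fun h ↦ ha ?_
  simpa only [neg_add_cancel, Pi.zero_apply] using congrFun h (-1)

end TupleValue

theorem IsRotationalSet.sigmad_ne_self {d : ℕ} {A : Set ℝ} (hA : IsRotationalSet d A) {x : ℝ}
    (hx : x ∈ A) : sigmad d x ≠ x := by
  obtain ⟨q, p, t, rfl, -, hlt, hp, hmap⟩ := hA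
  obtain ⟨i, rfl⟩ := hx
  intro hfix
  have val_eq {j k : ZMod q} (h : t j = t k) : j.val = k.val :=
    le_antisymm (not_lt.1 fun hkj ↦ (hlt k j hkj).ne' h) (not_lt.1 fun hjk ↦ (hlt j k hjk).ne h)
  have once : t (i + p) = t i := (hmap i).symm.trans hfix
  have twice : t (i + p + p) = t i := by rw [← hmap, once, hfix]
  -- For `q = 0`, `ZMod.val` is the absolute value on `ℤ` and not injective: `i + p = -i` is only
  -- excluded by applying `sigmad d` a second time.
  cases q with
  | zero =>
    have h₁ : Int.natAbs (i + p) = Int.natAbs i := val_eq once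
    have h₂ : Int.natAbs (i + p + p) = Int.natAbs i := val_eq twice
    change ℤ at i p
    exact hp (show p = 0 by omega)
  | succ n => exact hp (add_eq_left.1 (ZMod.val_injective (n + 1) (val_eq once)))

theorem exists_digit_add_one_lt_of_isRotationalSet {d q : ℕ} [NeZero q] (hd : 1 < d)
    {a : ZMod q → ℕ} (ha : ∀ i, a i < d)
    (hrot : IsRotationalSet d (sigmaOrbit d (tuplePoint d q a))) : ∃ i, a i + 1 < d := by
  by_contra! hmax
  have ha_eq : a = fun _ ↦ d - 1 := funext fun i ↦ by have := ha i; have := hmax i; omega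
  have hzero : tuplePoint d q a = 0 := by
    change Int.fract (tupleValue d q a) = 0
    rw [ha_eq, tupleValue_const_pred hd, Int.fract_one]
  refine hrot.sigmad_ne_self ⟨0, rfl⟩ ?_
  rw [Function.iterate_zero_apply, hzero, sigmad, mul_zero, Int.fract_zero]

theorem exists_sigmad_eq_zero_between_iff {d : ℕ} (hd : 0 < d) {x y : ℝ} (hx : 0 ≤ x)
    (hy : y ≤ 1) :
    (∃ r : ℝ, r ∈ Set.Ico (0 : ℝ) 1 ∧ x < r ∧ r < y ∧ sigmad d r = 0) ↔
      (⌊d * x⌋ : ℝ) + 1 < d * y := by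
  have hd₀ : (0 : ℝ) < d := Nat.cast_pos.2 hd
  constructor
  · rintro ⟨r, -, hxr, hry, hr⟩
    obtain ⟨m, hm⟩ := Int.fract_eq_zero_iff.1 hr
    have hfloor : ⌊d * x⌋ < m := Int.floor_lt.2 (hm ▸ mul_lt_mul_of_pos_left hxr hd₀)
    calc (⌊d * x⌋ : ℝ) + 1 ≤ m := mod_cast hfloor
      _ = d * r := hm
      _ < d * y := mul_lt_mul_of_pos_left hry hd₀
  · intro h
    have hxr : x < (⌊d * x⌋ + 1) / d := (lt_div_iff₀' hd₀).2 (Int.lt_floor_add_one _)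
    have hry : (⌊d * x⌋ + 1) / d < y := (div_lt_iff₀' hd₀).2 h
    refine ⟨_, ⟨hx.trans hxr.le, hry.trans_le hy⟩, hxr, hry, ?_⟩
    rw [sigmad, mul_div_cancel₀ _ hd₀.ne', Int.fract_add_one, Int.fract_intCast]

theorem stmt4_general {d q : ℕ} (hq : 1 ≤ q) {a b : ZMod q → ℕ} (ha : ∀ i, a i < d)
    (hb : ∀ i, b i < d) (ha' : ∃ i, a i + 1 < d) (hb' : ∃ i, b i + 1 < d) :
    a 0 < b 0 ↔
      ∃ r : ℝ, r ∈ Set.Ico (0:ℝ) 1 ∧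
        tuplePoint d q a < r ∧ r < tuplePoint d q b ∧ sigmad d r = 0 := by
  have : NeZero q := ⟨by omega⟩
  have hd : 1 < d := by obtain ⟨i, hi⟩ := ha'; omega
  rw [tuplePoint_eq_tupleValue ha ha', tuplePoint_eq_tupleValue hb hb',
    exists_sigmad_eq_zero_between_iff (by omega) (tupleValue_nonneg hd a)
      (tupleValue_lt_one hb hb').le,
    floor_natCast_mul_tupleValue ha ha', Int.cast_natCast]
  constructor
  · intro hab
    calc (a 0 : ℝ) + 1 ≤ b 0 := mod_cast hab
      _ < d * tupleValue d q b := natCast_lt_natCast_mul_tupleValue hd (by omega)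
  · intro hab
    have hle : ((a 0 + 1 : ℕ) : ℤ) ≤ ⌊d * tupleValue d q b⌋ :=
      Int.le_floor.2 (mod_cast hab.le)
    rw [floor_natCast_mul_tupleValue hb hb'] at hle
    exact mod_cast hle

theorem stmt4 (d q : ℕ) (hd : 2 ≤ d) (hq : 1 ≤ q)
    (a b : ZMod q → ℕ) (ha : ∀ i, a i < d) (hb : ∀ i, b i < d)
    (hne : tuplePoint d q a ≠ tuplePoint d q b)
    (hra : IsRotationalSet d (sigmaOrbit d (tuplePoint d q a)))
    (hrb : IsRotationalSet d (sigmaOrbit d (tuplePoint d q b))) :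
    a 0 < b 0 ↔
      ∃ r : ℝ, r ∈ Set.Ico (0:ℝ) 1 ∧
        tuplePoint d q a < r ∧ r < tuplePoint d q b ∧ sigmad d r = 0 := by
  have : NeZero q := ⟨by omega⟩
  exact stmt4_general hq ha hb (exists_digit_add_one_lt_of_isRotationalSet hd ha hra)
    (exists_digit_add_one_lt_of_isRotationalSet hd hb hrb)
end

section
/- Fix d ≥ 2 and a fraction p/q in lowest terms with q ≥ 2, 1 ≤ p ≤ q−1, gcd(p,q) = 1, and let p* be the multiplicative inverse of p in ℤ/qℤ. Let t = (a_0, a_1, ..., a_{q-1}) be a point of T given as a q-tuple of digits in {0,...,d−1}, and let O be the orbit of t under σ_d. Then t is the least element of O and O is a σ_d-rotational orbit with rotation number p/q if and only if a_0 ≤ a_{p*} ≤ a_{2p*} ≤ ... ≤ a_{(q-1)p*} (a chain of inequalities between consecutive terms a_{k p*} and a_{(k+1)p*} for k = 0, ..., q−2, with digit indices in ℤ/qℤ), where the inequality between a_{k p*} and a_{(k+1)p*} is strict for k = q−p−1, i.e. a_{-(p+1)p*} < a_{-p·p*}. -/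
/-!
Write `x j` for the value of the expansion `0.‾(a_j a_{j+1} … a_{j+q-1})`, so that
`d * x j = a_j + x (j + 1)`. A rotational orbit with least element `x 0` must be listed in
increasing order by `y k = x (k p*)`, and `d * y k = b k + y (k + p)` with `b k = a_{k p*}`.
Subtracting consecutive relations,
`d (y (k+1) - y k) = (b (k+1) - b k) + (y (k+p+1) - y (k+p))`.
For `k + p = -1` the last bracket is `y 0 - y (-1) ∈ (-1, 0)`, which accounts for the strict
inequality at `k = q-p-1`. Conversely, `0 < y (k+1) - y k` propagates from `k + p` to `k ≠ -1`,
and as `p` generates `ℤ/qℤ`, adding `p` repeatedly leads from any `k` to `-1`.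
-/

section ZModOrder

variable {q : ℕ} {α : Type*} [Preorder α] {f : ZMod q → α}

lemma apply_zero_lt_of_forall_val_lt (hf : ∀ i j : ZMod q, i.val < j.val → f i < f j)
    {i : ZMod q} (hi : i ≠ 0) : f 0 < f i :=
  hf 0 i (by rwa [ZMod.val_zero, ZMod.val_pos])

variable [NeZero q]

lemma forall_natCast_iff_forall_ne_neg_one {A : ZMod q → Prop} :
    (∀ k : ℕ, k + 1 < q → A k) ↔ ∀ k : ZMod q, k ≠ -1 → A k := by
  obtain ⟨n, rfl⟩ := Nat.exists_eq_succ_of_ne_zero (NeZero.ne q)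
  have ne_neg_one_iff (k : ZMod n.succ) : k ≠ -1 ↔ k.val + 1 < n.succ := by
    rw [← (ZMod.val_injective n.succ).ne_iff, ZMod.val_neg_one]
    have := ZMod.val_lt k
    omega
  refine ⟨fun h k hk => ?_, fun h k hk => h k ?_⟩
  · simpa only [ZMod.natCast_zmod_val] using h k.val ((ne_neg_one_iff k).1 hk)
  · rwa [ne_neg_one_iff, ZMod.val_natCast_of_lt (by omega)]

lemma forall_val_lt_iff_forall_lt_add_one :
    (∀ i j : ZMod q, i.val < j.val → f i < f j) ↔ ∀ k, k ≠ -1 → f k < f (k + 1) := by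
  rw [← forall_natCast_iff_forall_ne_neg_one]
  constructor
  · intro hf k hk
    rw [← Nat.cast_add_one]
    apply hf
    rw [ZMod.val_natCast_of_lt (by omega), ZMod.val_natCast_of_lt hk]
    exact k.lt_succ_self
  · intro hf i j hij
    have hmono : StrictMonoOn (fun n : ℕ => f n) (Set.Iio q) :=
      strictMonoOn_of_lt_add_one Set.ordConnected_Iio fun n _ _ hn => by
        simpa only [Nat.cast_add_one] using hf n hn
    simpa only [ZMod.natCast_zmod_val] using hmono (ZMod.val_lt i) (ZMod.val_lt j) hij

end ZModOrder

section Conjugacy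

variable {d q : ℕ} {P r : ZMod q} {f g : ZMod q → ℝ}

lemma iterate_sigmad_apply_zero (hf : ∀ i, sigmad d (f i) = f (i + P)) (n : ℕ) :
    (sigmad d)^[n] (f 0) = f (n * P) := by
  have hsemi : Function.Semiconj f (· + P) (sigmad d) := fun i => (hf i).symm
  simpa only [add_right_iterate, zero_add, nsmul_eq_mul] using ((hsemi.iterate_right n) 0).symm

variable [NeZero q]

lemma eq_iterate_sigmad (hr : P * r = 1) (hf : ∀ i, sigmad d (f i) = f (i + P)) (k : ZMod q) :
    f k = (sigmad d)^[(k * r).val] (f 0) := by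
  rw [iterate_sigmad_apply_zero hf, ZMod.natCast_zmod_val, mul_assoc, mul_comm r, hr, mul_one]

lemma range_eq_sigmaOrbit (hr : P * r = 1) (hf : ∀ i, sigmad d (f i) = f (i + P)) :
    Set.range f = sigmaOrbit d (f 0) := by
  ext s
  constructor
  · rintro ⟨k, rfl⟩
    exact ⟨_, (eq_iterate_sigmad hr hf k).symm⟩
  · rintro ⟨n, rfl⟩
    exact ⟨_, (iterate_sigmad_apply_zero hf n).symm⟩

lemma eq_of_apply_zero_eq (hr : P * r = 1) (hf : ∀ i, sigmad d (f i) = f (i + P))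
    (hg : ∀ i, sigmad d (g i) = g (i + P)) (h0 : f 0 = g 0) : f = g := by
  funext k
  rw [eq_iterate_sigmad hr hf, eq_iterate_sigmad hr hg, h0]

end Conjugacy

namespace IsRotational

variable {d q : ℕ} {P : ZMod q} {u : ZMod q → ℝ}

lemma apply_zero_le (h : IsRotational d q P u) (i : ZMod q) : u 0 ≤ u i := by
  obtain rfl | hi := eq_or_ne i 0
  · exact le_rfl
  · exact (apply_zero_lt_of_forall_val_lt h.2.1 hi).le

lemma apply_zero_ne_zero (h : IsRotational d q P u) : u 0 ≠ 0 := by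
  obtain ⟨-, hmono, hP, hrot⟩ := h
  intro h0
  have huP : u P = 0 := by
    rw [← zero_add P, ← hrot, h0, sigmad, mul_zero, Int.fract_zero]
  exact (apply_zero_lt_of_forall_val_lt hmono hP).ne (h0.trans huP.symm)

end IsRotational

lemma isLeast_and_exists_isRotational_iff {d q : ℕ} [NeZero q] {P r : ZMod q} {t : ℝ}
    (hr : P * r = 1) :
    ((∀ x ∈ sigmaOrbit d t, t ≤ x) ∧
        ∃ u : ZMod q → ℝ, Set.range u = sigmaOrbit d t ∧ IsRotational d q P u) ↔
      ∃ u : ZMod q → ℝ, u 0 = t ∧ IsRotational d q P u := by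
  constructor
  · rintro ⟨hleast, u, hrange, hu⟩
    obtain ⟨i, hi⟩ : t ∈ Set.range u := hrange ▸ ⟨0, rfl⟩
    have hu0 : t ≤ u 0 := hleast _ (hrange ▸ Set.mem_range_self 0)
    exact ⟨u, (hi ▸ hu.apply_zero_le i).antisymm hu0, hu⟩
  · rintro ⟨u, rfl, hu⟩
    have hrange := range_eq_sigmaOrbit hr hu.2.2.2
    exact ⟨hrange ▸ Set.forall_mem_range.2 hu.apply_zero_le, u, hrange, hu⟩

lemma sum_sub_one_mul_pow_reflect {R : Type*} [CommRing R] (x : R) (n : ℕ) :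
    ∑ i ∈ Finset.range n, (x - 1) * x ^ (n - 1 - i) = x ^ n - 1 := by
  rw [← Finset.mul_sum, Finset.sum_range_reflect (x ^ ·), mul_geom_sum]

lemma natCast_mul_pow_le_of_lt {b d : ℕ} (hb : b < d) (n : ℕ) :
    (b : ℝ) * (d : ℝ) ^ n ≤ ((d : ℝ) - 1) * (d : ℝ) ^ n := by
  have hb' : (b : ℝ) + 1 ≤ d := by exact_mod_cast hb
  gcongr
  linarith

section RepeatingExpansion

variable {q : ℕ}

/-- The real number with repeating base-`d` expansion `0.‾(a_j a_{j+1} … a_{j+q-1})`. It is not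
reduced modulo `1`, so it equals `1` rather than `0` when all digits are `d - 1`. -/
noncomputable def repeatingExpansion (d : ℕ) (a : ZMod q → ℕ) (j : ZMod q) : ℝ :=
  (∑ i ∈ Finset.range q, (a (j + i) : ℝ) * (d : ℝ) ^ (q - 1 - i)) / ((d : ℝ) ^ q - 1)

variable {d : ℕ} {a : ZMod q → ℕ}

lemma tuplePoint_eq_fract_repeatingExpansion :
    tuplePoint d q a = Int.fract (repeatingExpansion d a 0) := by
  simp only [tuplePoint, repeatingExpansion, zero_add]

variable [NeZero q]

lemma natCast_pow_sub_one_pos (hd : 1 < d) : (0 : ℝ) < (d : ℝ) ^ q - 1 :=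
  sub_pos.2 (one_lt_pow₀ (by exact_mod_cast hd) (NeZero.ne q))

lemma mul_repeatingExpansion (hd : 1 < d) (j : ZMod q) :
    d * repeatingExpansion d a j = a j + repeatingExpansion d a (j + 1) := by
  let F (i : ℕ) : ℝ := a (j + i) * (d : ℝ) ^ (q - i)
  have hleft : ∑ i ∈ Finset.range q, F i =
      d * ∑ i ∈ Finset.range q, (a (j + i) : ℝ) * (d : ℝ) ^ (q - 1 - i) := by
    rw [Finset.mul_sum]
    refine Finset.sum_congr rfl fun i hi => ?_
    have hexp : q - i = q - 1 - i + 1 := by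
      have := Finset.mem_range.1 hi
      omega
    simp only [F, hexp, pow_succ]
    ring
  have hright : ∑ i ∈ Finset.range q, F (i + 1) =
      ∑ i ∈ Finset.range q, (a (j + 1 + i) : ℝ) * (d : ℝ) ^ (q - 1 - i) := by
    refine Finset.sum_congr rfl fun i _ => ?_
    simp only [F, Nat.cast_add_one, Nat.sub_sub, add_assoc, add_comm (1 : ZMod q), add_comm 1 i]
  have hfirst : F 0 = a j * (d : ℝ) ^ q := by simp only [F, Nat.cast_zero, add_zero, Nat.sub_zero]
  have hlast : F q = a j := by simp only [F, CharP.cast_eq_zero, add_zero, Nat.sub_self,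
    pow_zero, mul_one]
  have hsum := (Finset.sum_range_succ F q).symm.trans (Finset.sum_range_succ' F q)
  rw [hleft, hright, hfirst, hlast] at hsum
  have hpos := natCast_pow_sub_one_pos (q := q) hd
  simp only [repeatingExpansion]
  field_simp
  linear_combination hsum

lemma repeatingExpansion_nonneg (hd : 1 < d) (j : ZMod q) : 0 ≤ repeatingExpansion d a j :=
  div_nonneg (by positivity) (natCast_pow_sub_one_pos hd).le

lemma repeatingExpansion_le_one (hd : 1 < d) (ha : ∀ j, a j < d) (j : ZMod q) :
    repeatingExpansion d a j ≤ 1 := by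
  rw [repeatingExpansion, div_le_one (natCast_pow_sub_one_pos hd), ← sum_sub_one_mul_pow_reflect]
  exact Finset.sum_le_sum fun i _ => natCast_mul_pow_le_of_lt (ha _) _

lemma repeatingExpansion_eq_one_iff (hd : 1 < d) (ha : ∀ j, a j < d) (j : ZMod q) :
    repeatingExpansion d a j = 1 ↔ ∀ i, a i + 1 = d := by
  have hterm (i : ZMod q) (n : ℕ) :
      (a i : ℝ) * (d : ℝ) ^ n = ((d : ℝ) - 1) * (d : ℝ) ^ n ↔ a i + 1 = d := by
    rw [mul_left_inj' (by positivity), eq_sub_iff_add_eq]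
    norm_cast
  rw [repeatingExpansion, div_eq_one_iff_eq (natCast_pow_sub_one_pos hd).ne',
    ← sum_sub_one_mul_pow_reflect,
    Finset.sum_eq_sum_iff_of_le fun i _ => natCast_mul_pow_le_of_lt (ha _) _]
  simp only [hterm, Finset.mem_range]
  refine ⟨fun h i => ?_, fun h i _ => h _⟩
  simpa only [ZMod.natCast_zmod_val, add_sub_cancel] using h (i - j).val (ZMod.val_lt _)

lemma repeatingExpansion_mem_Ico (hd : 1 < d) (ha : ∀ j, a j < d) (hne : ¬∀ i, a i + 1 = d)
    (j : ZMod q) : repeatingExpansion d a j ∈ Set.Ico 0 1 :=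
  ⟨repeatingExpansion_nonneg hd j, (repeatingExpansion_le_one hd ha j).lt_of_ne
    fun h => hne ((repeatingExpansion_eq_one_iff hd ha j).1 h)⟩

lemma sigmad_repeatingExpansion (hd : 1 < d) (ha : ∀ j, a j < d) (hne : ¬∀ i, a i + 1 = d)
    (j : ZMod q) : sigmad d (repeatingExpansion d a j) = repeatingExpansion d a (j + 1) := by
  rw [sigmad, mul_repeatingExpansion hd, Int.fract_natCast_add]
  exact Int.fract_eq_self.2 (repeatingExpansion_mem_Ico hd ha hne _)

end RepeatingExpansion

section LeadingDigit

variable {d b c : ℕ} {x x' y y' : ℝ}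

lemma digit_le_of_le (hx : d * x = b + x') (hy : d * y = c + y') (hx' : 0 ≤ x') (hy' : y' < 1)
    (hxy : x ≤ y) : b ≤ c := by
  refine Nat.lt_add_one_iff.1 ?_
  suffices (b : ℝ) < c + 1 by exact_mod_cast this
  calc (b : ℝ) ≤ d * x := by linarith
    _ ≤ d * y := by gcongr
    _ < c + 1 := by linarith

lemma digit_lt_of_le (hx : d * x = b + x') (hy : d * y = c + y') (hlt : y' < x')
    (hxy : x ≤ y) : b < c := by
  suffices (b : ℝ) < c by exact_mod_cast this
  have : (d : ℝ) * x ≤ d * y := by gcongr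
  linarith

lemma lt_of_digit_le (hx : d * x = b + x') (hy : d * y = c + y') (hlt : x' < y')
    (hbc : b ≤ c) : x < y := by
  have hbc' : (b : ℝ) ≤ c := by exact_mod_cast hbc
  exact lt_of_mul_lt_mul_left (by linarith) d.cast_nonneg

lemma lt_of_digit_lt (hx : d * x = b + x') (hy : d * y = c + y') (hx' : x' < 1) (hy' : 0 ≤ y')
    (hbc : b < c) : x < y := by
  have hbc' : (b : ℝ) + 1 ≤ c := by exact_mod_cast hbc
  exact lt_of_mul_lt_mul_left (by linarith) d.cast_nonneg

end LeadingDigit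

section DigitCriterion

variable {d q : ℕ} {P r : ZMod q} {y : ZMod q → ℝ} {b : ZMod q → ℕ}

lemma forall_lt_add_one_of_digits [NeZero q] (hr : P * r = 1) (hy : ∀ k, y k ∈ Set.Ico 0 1)
    (hrec : ∀ k, d * y k = b k + y (k + P)) (hb : ∀ k, k ≠ -1 → b k ≤ b (k + 1))
    (hb' : b (-(P + 1)) < b (-P)) (k : ZMod q) (hk : k ≠ -1) : y k < y (k + 1) := by
  have descent (n : ℕ) (k : ZMod q) (hn : k + n * P = -1) (hk : k ≠ -1) : y k < y (k + 1) := by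
    induction n generalizing k with
    | zero => exact absurd (by simpa using hn) hk
    | succ n ih =>
      by_cases hkP : k + P = -1
      · obtain rfl : k = -(P + 1) := by linear_combination hkP
        rw [show -(P + 1) + 1 = -P by ring]
        exact lt_of_digit_lt (hrec _) (hrec _) (hy _).2 (hy _).1 hb'
      · have hnext : y (k + P) < y (k + P + 1) :=
          ih (k + P) (by push_cast at hn; linear_combination hn) hkP
        exact lt_of_digit_le (hrec k) (hrec (k + 1)) (by rwa [add_right_comm]) (hb k hk)
  refine descent ((-1 - k) * r).val k ?_ hk
  rw [ZMod.natCast_zmod_val]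
  linear_combination (-1 - k) * hr

variable [Fact (1 < q)] {a : ZMod q → ℕ}

lemma forall_lt_add_one_iff_digits (hr : P * r = 1) (hy : ∀ k, y k ∈ Set.Ico 0 1)
    (hrec : ∀ k, d * y k = b k + y (k + P)) :
    (∀ k, k ≠ -1 → y k < y (k + 1)) ↔
      (∀ k, k ≠ -1 → b k ≤ b (k + 1)) ∧ b (-(P + 1)) < b (-P) := by
  refine ⟨fun h => ⟨fun k hk =>
      digit_le_of_le (hrec k) (hrec (k + 1)) (hy _).1 (hy _).2 (h k hk).le, ?_⟩,
    fun h => forall_lt_add_one_of_digits hr hy hrec h.1 h.2⟩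
  have hP : P ≠ 0 := left_ne_zero_of_mul_eq_one hr
  have hstep : y (-(P + 1)) < y (-P) := by
    simpa using h (-(P + 1)) (by simpa [neg_eq_iff_eq_neg] using hP)
  have hwrap : y 0 < y (-1) :=
    apply_zero_lt_of_forall_val_lt (forall_val_lt_iff_forall_lt_add_one.2 h) (by simp)
  exact digit_lt_of_le (hrec _) (hrec _) (by simpa using hwrap) hstep.le

lemma exists_isRotational_repeatingExpansion_iff (hd : 1 < d) (ha : ∀ j, a j < d)
    (hne : ¬∀ i, a i + 1 = d) (hr : P * r = 1) :
    (∃ u : ZMod q → ℝ, u 0 = repeatingExpansion d a 0 ∧ IsRotational d q P u) ↔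
      ∀ k, k ≠ -1 → repeatingExpansion d a (k * r) < repeatingExpansion d a ((k + 1) * r) := by
  let y (k : ZMod q) : ℝ := repeatingExpansion d a (k * r)
  have hy (k : ZMod q) : sigmad d (y k) = y (k + P) := by
    simp only [y, sigmad_repeatingExpansion hd ha hne, add_mul, hr]
  have hy0 : y 0 = repeatingExpansion d a 0 := by simp only [y, zero_mul]
  change _ ↔ ∀ k, k ≠ -1 → y k < y (k + 1)
  rw [← hy0, ← forall_val_lt_iff_forall_lt_add_one]
  constructor
  · rintro ⟨u, hu0, -, hmono, -, hu⟩
    rwa [← eq_of_apply_zero_eq hr hu hy hu0]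
  · intro hmono
    exact ⟨y, rfl, fun k => repeatingExpansion_mem_Ico hd ha hne _, hmono,
      left_ne_zero_of_mul_eq_one hr, hy⟩

theorem exists_isRotational_tuplePoint_iff (hd : 1 < d) (ha : ∀ j, a j < d) (hr : P * r = 1) :
    (∃ u : ZMod q → ℝ, u 0 = tuplePoint d q a ∧ IsRotational d q P u) ↔
      (∀ k, k ≠ -1 → a (k * r) ≤ a ((k + 1) * r)) ∧ a (-(P + 1) * r) < a (-P * r) := by
  rw [tuplePoint_eq_fract_repeatingExpansion]
  by_cases hfull : ∀ i, a i + 1 = d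
  · rw [(repeatingExpansion_eq_one_iff hd ha 0).2 hfull, Int.fract_one]
    refine iff_of_false (fun ⟨u, hu0, hu⟩ => hu.apply_zero_ne_zero hu0) fun ⟨_, hlt⟩ => ?_
    exact hlt.ne (Nat.succ_injective ((hfull _).trans (hfull _).symm))
  · have hmem := repeatingExpansion_mem_Ico hd ha hfull
    rw [Int.fract_eq_self.2 (hmem 0), exists_isRotational_repeatingExpansion_iff hd ha hfull hr]
    refine forall_lt_add_one_iff_digits (d := d) (b := fun k => a (k * r)) hr
      (fun k => hmem (k * r)) fun k => ?_
    rw [mul_repeatingExpansion hd, add_mul, hr]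

end DigitCriterion

theorem stmt9 (d q p : ℕ) (hd : 2 ≤ d) (hq : 2 ≤ q)
    (hp1 : 1 ≤ p) (hp2 : p ≤ q - 1) (hpq : Nat.gcd p q = 1)
    (a : ZMod q → ℕ) (ha : ∀ j, a j < d) :
    -- LHS: `t = tuplePoint d q a` is the least element of its orbit `O`, and `O`
    -- is a `σ_d`-rotational orbit with rotation number `p/q`
    ((∀ x ∈ sigmaOrbit d (tuplePoint d q a), tuplePoint d q a ≤ x) ∧
      ∃ u : ZMod q → ℝ,
        Set.range u = sigmaOrbit d (tuplePoint d q a) ∧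
        IsRotational d q ((p : ℕ) : ZMod q) u) ↔
    -- RHS: `a_0 ≤ a_{p*} ≤ a_{2p*} ≤ ⋯ ≤ a_{(q-1)p*}`, with the inequality between
    -- `a_{kp*}` and `a_{(k+1)p*}` strict at `k = q-p-1`, i.e. `a_{-(p+1)p*} < a_{-p·p*}`
    ((∀ k : ℕ, k + 1 < q →
        a ((k : ZMod q) * ((p : ZMod q))⁻¹) ≤
        a (((k + 1 : ℕ) : ZMod q) * ((p : ZMod q))⁻¹)) ∧
      a ((-((p : ZMod q) + 1)) * ((p : ZMod q))⁻¹) <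
        a ((-(p : ZMod q)) * ((p : ZMod q))⁻¹)) := by
  have : Fact (1 < q) := ⟨hq⟩
  have hinv : (p : ZMod q) * (p : ZMod q)⁻¹ = 1 := ZMod.coe_mul_inv_eq_one p hpq
  rw [isLeast_and_exists_isRotational_iff hinv, exists_isRotational_tuplePoint_iff hd ha hinv,
    ← forall_natCast_iff_forall_ne_neg_one]
  simp only [Nat.cast_add_one]
end

section
/- Fix d ≥ 2 and a fraction p/q in lowest terms with q ≥ 2, 1 ≤ p ≤ q−1, gcd(p,q) = 1. The map sending a σ_d-rotational orbit with rotation number p/q to its representative sequence is a bijection onto the set of all (d−1)-sequences of length q. In particular, the number of σ_d-rotational orbits with rotation number p/q equals the binomial coefficient C(d−2+q, d−2). -/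
/-- The `k`-th term (`0 ≤ k ≤ q-1`) of the representative sequence of the rotational orbit
whose least element has digits `a`: it is `a_{kp*}` for `0 ≤ k ≤ q-p-1` and
`a_{kp*} - 1` for `q-p ≤ k ≤ q-1`. -/
def repDigit (q p : ℕ) (a : ZMod q → ℕ) (k : ℕ) : ℕ :=
  if k ≤ q - p - 1 then a ((k : ZMod q) * ((p : ZMod q))⁻¹)
  else a ((k : ZMod q) * ((p : ZMod q))⁻¹) - 1

/-! Extend the points `t 0 < ⋯ < t (q - 1)` of a rotational set to a sequence `X : ℤ → ℝ` with
`X (k + q) = X k + 1`. Rotation by `p/q` under `σ_d` then reads `d * X k = B k + X (k + p)` with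
`B k` an integer, `B (k + q) = B k + (d - 1)`, and `B 0, …, B (q - 1)` is the representative
sequence: the `-1` in its last `p` terms is the wrap-around `X (k + p) = t (k + p - q) + 1`.

Conversely `B` determines `X`, namely
`X k = (p + ∑ j < q, B (k + j p) d ^ (q - 1 - j)) / (d ^ q - 1)`. The gaps `D` of `X` satisfy
`d * D k = (B (k + 1) - B k) + D (k + p)`, and following them around the cycle `k ↦ k + p` shows
that `X` is strictly increasing iff `B` is nondecreasing; the normalization `X (-1) < 0 ≤ X 0`
likewise corresponds to `B (-1) < 0 ≤ B 0`. So the orbits correspond to the nondecreasing sequences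
`0 ≤ B 0 ≤ ⋯ ≤ B (q - 1) < d - 1`, that is, to multisets of size `q` in a set of `d - 1`
elements. -/

open Finset
open scoped AddConstMap
open AddConstMapClass (map_add_const map_add_nsmul)

section GeometricGrowth

variable {ι R : Type*} [CommRing R] [LinearOrder R] [IsStrictOrderedRing R]
  {τ : ι → ι} {f : ι → R} {β : R}

theorem map_iterate_le_pow_mul (hβ : 0 ≤ β) (h : ∀ i, f (τ i) ≤ β * f i) (n : ℕ) (i : ι) :
    f (τ^[n] i) ≤ β ^ n * f i := by
  induction n with
  | zero => simp
  | succ n ih =>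
    calc f (τ^[n + 1] i) ≤ β * f (τ^[n] i) := by
          simpa only [Function.iterate_succ_apply'] using h (τ^[n] i)
      _ ≤ β * (β ^ n * f i) := mul_le_mul_of_nonneg_left ih hβ
      _ = β ^ (n + 1) * f i := by ring

theorem nonneg_of_map_le_mul (hβ : 1 < β) (h : ∀ i, f (τ i) ≤ β * f i) {n : ℕ} (hn : n ≠ 0)
    {i : ι} (hi : f (τ^[n] i) = f i) : 0 ≤ f i := by
  have hgrow : f i ≤ β ^ n * f i := hi ▸ map_iterate_le_pow_mul (by positivity) h n i
  have hpow : 1 < β ^ n := one_lt_pow₀ hβ hn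
  by_contra! hneg
  exact hgrow.not_gt (mul_lt_of_one_lt_left hneg hpow)

end GeometricGrowth

theorem mul_sum_range_mul_pow {R : Type*} [CommSemiring R] (β : R) (u : ℕ → R) (n : ℕ) :
    β * ∑ j ∈ range n, u j * β ^ (n - 1 - j) + u n =
      u 0 * β ^ n + ∑ j ∈ range n, u (j + 1) * β ^ (n - 1 - j) := by
  have hraise : β * ∑ j ∈ range n, u j * β ^ (n - 1 - j) = ∑ j ∈ range n, u j * β ^ (n - j) := by
    rw [mul_sum]
    refine sum_congr rfl fun j hj => ?_
    have hj : j < n := mem_range.1 hj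
    rw [show n - j = n - 1 - j + 1 by omega, pow_succ]
    ring
  calc _ = ∑ j ∈ range (n + 1), u j * β ^ (n - j) := by simp [hraise, sum_range_succ]
    _ = _ := by simp [sum_range_succ', add_comm, Nat.sub_sub]

theorem sum_range_sub_one_mul_pow {R : Type*} [CommRing R] (β : R) (n : ℕ) :
    ∑ j ∈ range n, (β - 1) * β ^ (n - 1 - j) = β ^ n - 1 := by
  rw [← mul_sum, sum_range_reflect (fun j => β ^ j), mul_geom_sum]

theorem natCast_mul_surjective {q p : ℕ} [NeZero q] (hpq : p.Coprime q) :
    Function.Surjective fun k : ℕ => (k * p : ZMod q) := fun i =>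
  ⟨(i * (p : ZMod q)⁻¹).val, by
    simp only [ZMod.natCast_zmod_val, mul_assoc]
    rw [mul_comm _ (p : ZMod q), ZMod.coe_mul_inv_eq_one p hpq, mul_one]⟩

theorem forall_int_of_periodic_of_coprime {q p : ℕ} [NeZero q] (hpq : p.Coprime q) {P : ℤ → Prop}
    (hper : Function.Periodic P q) (hstep : ∀ k, P k → P (k + p)) {k : ℤ} (hk : P k) (m : ℤ) :
    P m := by
  have hmul (n : ℕ) : P (k + n * p) := by
    induction n with
    | zero => simpa using hk
    | succ n ih => simpa [add_mul, add_assoc] using hstep _ ih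
  obtain ⟨n, hn⟩ := natCast_mul_surjective hpq ((m - k : ℤ) : ZMod q)
  obtain ⟨l, hl⟩ : (q : ℤ) ∣ m - k - n * p := by
    rw [← ZMod.intCast_eq_intCast_iff_dvd_sub]
    exact_mod_cast hn
  have hper' : P (k + n * p + l * q) = P (k + n * p) := hper.int_mul l _
  rw [show m = k + n * p + l * q by linear_combination hl, hper']
  exact hmul n

section Counting

variable {α : Type*} [LinearOrder α]

theorem bijective_orderHom_toSym (q : ℕ) :
    Function.Bijective fun f : Fin q →o α => (Sym.mk (List.ofFn f) (by simp) : Sym α q) := by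
  constructor
  · intro f g hfg
    have hperm : (List.ofFn f).Perm (List.ofFn g) := Quotient.exact (congrArg Subtype.val hfg)
    have hlist := hperm.eq_of_sortedLE (List.sortedLE_ofFn_iff.2 f.monotone)
      (List.sortedLE_ofFn_iff.2 g.monotone)
    exact DFunLike.coe_injective (List.ofFn_injective hlist)
  · rintro ⟨m, rfl⟩
    obtain ⟨l, hl, rfl⟩ : ∃ l : List α, l.SortedLE ∧ (l : Multiset α) = m :=
      Quotient.inductionOn m fun l =>
        ⟨l.mergeSort, List.sortedLE_mergeSort, Quotient.sound (List.mergeSort_perm l _)⟩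
    exact ⟨⟨l.get, hl.monotone_get⟩, Subtype.ext (congrArg Multiset.ofList (List.ofFn_get l))⟩

theorem natCard_orderHom_fin (q : ℕ) : Nat.card (Fin q →o α) = (Nat.card α).multichoose q := by
  rw [Nat.card_eq_of_bijective _ (bijective_orderHom_toSym q), Sym.natCard_sym_eq_multichoose]

end Counting

/-- Monotone sequences of natural numbers below `n` as monotone maps to `Fin n`, the form in which
they are counted by multisets. -/
def boundedMonotoneEquiv (n q : ℕ) :
    {s : Fin q → ℕ // Monotone s ∧ ∀ k, s k < n} ≃ (Fin q →o Fin n) where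
  toFun s := ⟨fun k => ⟨s.1 k, s.2.2 k⟩, fun _ _ h => s.2.1 h⟩
  invFun f := ⟨fun k => f k, fun _ _ h => f.monotone h, fun k => (f k).isLt⟩

theorem natCard_monotone_lt (n q : ℕ) :
    Nat.card {s : Fin q → ℕ // Monotone s ∧ ∀ k, s k < n} = n.multichoose q := by
  rw [Nat.card_congr (boundedMonotoneEquiv n q), natCard_orderHom_fin, Nat.card_fin]

section ZModLift

variable {q : ℕ} {R : Type*} [AddCommGroup R] {m : R}

theorem apply_neg_one_eq (f : ℤ →+c[(q : ℤ), m] R) : f (-1) = f (q - 1) - m := by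
  rw [← AddConstMapClass.map_sub_const, show (q : ℤ) - 1 - q = -1 by ring]

variable [NeZero q]

/-- The extension of a function on `ZMod q`, read on the representatives `0, …, q - 1`, to the
sequence on `ℤ` that grows by `m` over each period `q`. -/
def zmodLift (m : R) (s : ZMod q → R) : ℤ →+c[(q : ℤ), m] R where
  toFun k := s k + (k / q) • m
  map_add_const' k := by
    rw [Int.add_ediv_of_dvd_right dvd_rfl, Int.ediv_self (by simp [NeZero.ne q]), add_smul,
      one_smul, ← add_assoc, Int.cast_add, Int.cast_natCast, ZMod.natCast_self, add_zero]

theorem zmodLift_apply (m : R) (s : ZMod q → R) (k : ℤ) : zmodLift m s k = s k + (k / q) • m :=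
  rfl

theorem zmodLift_of_mem_Ico (m : R) (s : ZMod q → R) {k : ℤ} (hk : k ∈ Set.Ico (0 : ℤ) q) :
    zmodLift m s k = s k := by
  rw [zmodLift_apply, Int.ediv_eq_zero_of_lt hk.1 hk.2, zero_smul, add_zero]

theorem zmodLift_natCast (m : R) (s : ZMod q → R) {k : ℕ} (hk : k < q) :
    zmodLift m s k = s k := by
  rw [zmodLift_of_mem_Ico m s ⟨Int.natCast_nonneg k, Int.ofNat_lt.2 hk⟩, Int.cast_natCast]

theorem zmodLift_val (m : R) (s : ZMod q → R) (i : ZMod q) : zmodLift m s i.val = s i := by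
  rw [zmodLift_natCast m s i.val_lt, ZMod.natCast_zmod_val]

theorem zmodLift_restrict (f : ℤ →+c[(q : ℤ), m] R) :
    zmodLift m (fun i : ZMod q => f i.val) = f := by
  ext k
  rw [zmodLift_apply, ZMod.val_intCast, ← AddConstMapClass.map_add_zsmul]
  congr 1
  rw [smul_eq_mul, mul_comm, Int.emod_add_mul_ediv]

variable [PartialOrder R] [IsOrderedAddMonoid R] {f : ℤ →+c[(q : ℤ), m] R}

theorem strictMono_of_strictMonoOn_Ico (hf : StrictMonoOn f (Set.Ico 0 q)) (h : f (-1) < f 0) :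
    StrictMono f := by
  have hq : (0 : ℤ) < q := by simp [NeZero.pos q]
  refine (AddConstMapClass.strictMono_iff_Icc hq (-1)).2 fun i hi j hj hij => ?_
  have hj' : j ∈ Set.Ico (0 : ℤ) q := ⟨by grind, by grind⟩
  rcases hi.1.eq_or_lt with rfl | hi'
  · exact h.trans_le (hf.monotoneOn ⟨le_rfl, hq⟩ hj' hj'.1)
  · exact hf ⟨hi', hij.trans hj'.2⟩ hj' hij

theorem monotone_of_monotoneOn_Ico (hf : MonotoneOn f (Set.Ico 0 q)) (h : f (-1) ≤ f 0) :
    Monotone f := by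
  have hq : (0 : ℤ) < q := by simp [NeZero.pos q]
  refine (AddConstMapClass.monotone_iff_Icc hq (-1)).2 fun i hi j hj hij => ?_
  rcases hi.1.eq_or_lt with rfl | hi'
  · rcases hj.1.eq_or_lt with rfl | hj'
    · rfl
    · exact h.trans (hf ⟨le_rfl, hq⟩ ⟨hj', by grind⟩ hj')
  · exact hf ⟨hi', by grind⟩ ⟨by grind, by grind⟩ hij

end ZModLift

section LiftedEquation

variable {d q p : ℕ} {X : ℤ →+c[(q : ℤ), (1 : ℝ)] ℝ} {B : ℤ → ℤ}

theorem map_add_const_of_lift (h : ∀ k, d * X k = B k + X (k + p)) (k : ℤ) :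
    B (k + q) = B k + (d - 1) := by
  have hk := h (k + q)
  rw [add_right_comm, map_add_const, map_add_const] at hk
  have : (B (k + q) : ℝ) = B k + (d - 1) := by linarith [h k]
  exact_mod_cast this

theorem lift_normalized_iff (hd : 1 ≤ d) (hp1 : 1 ≤ p) (hp2 : p < q)
    (h : ∀ k, d * X k = B k + X (k + p)) (hX : StrictMono X) :
    0 ≤ X 0 ∧ X (-1) < 0 ↔ 0 ≤ B 0 ∧ B (-1) < 0 := by
  have hd' : (1 : ℝ) ≤ d := by exact_mod_cast hd
  have hlast : X (-1) = X (q - 1) - 1 := apply_neg_one_eq X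
  have hp : X (0 + p) ≤ X (q - 1) := hX.monotone (by omega)
  have hp' : X (-1 + p) < X (q - 1) := hX (by omega)
  have h0p : X 0 < X (0 + p) := hX (by omega)
  have h1p : X 0 ≤ X (-1 + p) := hX.monotone (by omega)
  have eq0 := h 0
  have eq1 := h (-1)
  constructor
  · rintro ⟨h0, h1⟩
    have hd0 : 0 ≤ d * X 0 := by positivity
    have hd1 : d * X (-1) < 0 := mul_neg_of_pos_of_neg (by linarith) h1
    have hB0 : (-1 : ℝ) < B 0 := by linarith
    have hB1 : (B (-1) : ℝ) < 0 := by linarith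
    exact ⟨by exact_mod_cast hB0, by exact_mod_cast hB1⟩
  · rintro ⟨h0, h1⟩
    have hB0 : (0 : ℝ) ≤ B 0 := by exact_mod_cast h0
    have hB1 : (B (-1) : ℝ) ≤ -1 := by exact_mod_cast Int.le_sub_one_of_lt h1
    exact ⟨by nlinarith, by nlinarith⟩

variable [NeZero q]

theorem monotone_of_strictMono_lift (hd : 1 ≤ d) (h : ∀ k, d * X k = B k + X (k + p))
    (hX : StrictMono X) : Monotone B := by
  refine monotone_int_of_le_succ fun k => ?_
  have hgap : X k < X (k + 1) := hX (by simp)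
  have hshift : X (k + 1 + p) ≤ X (k + p) + 1 := by
    rw [← map_add_const]
    have : 1 ≤ q := NeZero.one_le
    exact hX.monotone (by omega)
  have hd' : (1 : ℝ) ≤ d := by exact_mod_cast hd
  have hlt : (B k : ℝ) < B (k + 1) + 1 := by nlinarith [h k, h (k + 1)]
  exact Int.lt_add_one_iff.1 (by exact_mod_cast hlt)

theorem strictMono_lift_of_monotone (hd : 2 ≤ d) (hpq : p.Coprime q)
    (h : ∀ k, d * X k = B k + X (k + p)) (hB : Monotone B) : StrictMono X := by
  have hd' : (1 : ℝ) < d := by exact_mod_cast hd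
  let gap : ℤ → ℝ := fun k => X (k + 1) - X k
  have hper : Function.Periodic gap q := fun k => by
    simp only [gap, add_right_comm k (q : ℤ) 1, map_add_const, add_sub_add_right_eq_sub]
  have hstep (k : ℤ) : gap (k + p) ≤ d * gap k := by
    have hBk : (B k : ℝ) ≤ B (k + 1) := by exact_mod_cast hB (by simp)
    have := h (k + 1)
    rw [add_right_comm] at this
    simp only [gap]
    linarith [h k]
  have hnonneg (k : ℤ) : 0 ≤ gap k :=
    nonneg_of_map_le_mul (τ := (· + (p : ℤ))) hd' hstep (NeZero.ne q) (by
      rw [add_right_iterate_apply, nsmul_eq_mul, mul_comm]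
      exact hper.nat_mul p k)
  have hzero (k : ℤ) (hk : gap k = 0) : gap (k + p) = 0 :=
    ((hstep k).trans_eq (by rw [hk, mul_zero])).antisymm (hnonneg _)
  refine strictMono_int_of_lt_succ fun k => sub_pos.1 ((hnonneg k).lt_of_ne' fun hk => ?_)
  have hconst (n : ℤ) : gap n = 0 :=
    forall_int_of_periodic_of_coprime hpq (hper.comp (· = 0)) hzero hk n
  have hX (n : ℕ) : X n = X 0 := by
    induction n with
    | zero => rfl
    | succ n ih => rw [← ih]; exact_mod_cast sub_eq_zero.1 (hconst n)
  have hq : X q = X 0 + 1 := by simpa using map_add_const X 0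
  linarith [hX q]

theorem lift_eq_of_eq {X' : ℤ →+c[(q : ℤ), (1 : ℝ)] ℝ} (hd : 2 ≤ d)
    (h : ∀ k, d * X k = B k + X (k + p)) (h' : ∀ k, d * X' k = B k + X' (k + p)) : X = X' := by
  have hle {Y Z : ℤ →+c[(q : ℤ), (1 : ℝ)] ℝ} (hY : ∀ k, d * Y k = B k + Y (k + p))
      (hZ : ∀ k, d * Z k = B k + Z (k + p)) (k : ℤ) : 0 ≤ Y k - Z k :=
    nonneg_of_map_le_mul (τ := (· + (p : ℤ))) (f := fun k => Y k - Z k) (β := d)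
      (by exact_mod_cast hd) (fun k => by linarith [hY k, hZ k]) (NeZero.ne q) (by
        rw [add_right_iterate_apply, nsmul_eq_mul, mul_comm, ← nsmul_eq_mul]
        simp only [map_add_nsmul, add_sub_add_right_eq_sub])
  ext k
  linarith [hle h h' k, hle h' h k]

theorem exists_lift (hd : 2 ≤ d) (p : ℕ) (B : ℤ →+c[(q : ℤ), (d - 1 : ℤ)] ℤ) :
    ∃ X : ℤ →+c[(q : ℤ), (1 : ℝ)] ℝ, ∀ k, d * X k = B k + X (k + p) := by
  have hden : (d : ℝ) ^ q - 1 ≠ 0 :=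
    sub_ne_zero.2 (one_lt_pow₀ (by exact_mod_cast hd) (NeZero.ne q)).ne'
  let S (k : ℤ) : ℝ := ∑ j ∈ range q, (B (k + j * p) : ℝ) * (d : ℝ) ^ (q - 1 - j)
  have hS (k : ℤ) : S (k + q) = S k + (d ^ q - 1) := by
    simp only [S, ← sum_range_sub_one_mul_pow, ← sum_add_distrib, ← add_mul]
    refine sum_congr rfl fun j _ => ?_
    rw [add_right_comm, map_add_const]
    push_cast
    rfl
  have hshift (k : ℤ) : d * S k + p * (d - 1) = B k * (d ^ q - 1) + S (k + p) := by
    have := mul_sum_range_mul_pow (d : ℝ) (fun j : ℕ => (B (k + j * p) : ℝ)) q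
    have hBq : B (k + q * p) = B k + p * (d - 1) := by
      rw [mul_comm, ← nsmul_eq_mul, map_add_nsmul, nsmul_eq_mul]
    have hBp (j : ℕ) : k + (j + 1 : ℕ) * (p : ℤ) = k + p + j * p := by push_cast; ring
    simp only [hBq, hBp, Nat.cast_zero, zero_mul, add_zero] at this
    push_cast at this
    simp only [S]
    linarith
  refine ⟨⟨fun k => (S k + p) / (d ^ q - 1), fun k => ?_⟩, fun k => ?_⟩
  · rw [hS]
    field_simp
    ring
  · simp only [AddConstMap.coe_mk]
    field_simp
    linarith [hshift k]

end LiftedEquation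

/-- The real number with repeating base-`d` expansion `0.‾(a_0 a_1 … a_{q-1})`; unlike
`tuplePoint` it equals `1`, not `0`, when all digits are `d - 1`. -/
noncomputable def repeatingValue (d q : ℕ) (a : ZMod q → ℕ) : ℝ :=
  (∑ i ∈ range q, (a (i : ZMod q) : ℝ) * (d : ℝ) ^ (q - 1 - i)) / ((d : ℝ) ^ q - 1)

section RepeatingExpansions

variable {d q : ℕ} {a : ZMod q → ℕ}

theorem tuplePoint_eq_fract (a : ZMod q → ℕ) :
    tuplePoint d q a = Int.fract (repeatingValue d q a) :=
  rfl

theorem repeatingValue_nonneg (hd : 1 ≤ d) (a : ZMod q → ℕ) : 0 ≤ repeatingValue d q a := by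
  have : (1 : ℝ) ≤ d ^ q := one_le_pow₀ (by exact_mod_cast hd)
  exact div_nonneg (by positivity) (by linarith)

theorem repeatingValue_le_one (ha : ∀ j, a j < d) : repeatingValue d q a ≤ 1 := by
  have hd : (1 : ℝ) ≤ d := by exact_mod_cast Nat.one_le_of_lt (ha 0)
  have hpow : (1 : ℝ) ≤ d ^ q := one_le_pow₀ hd
  refine div_le_one_of_le₀ ?_ (by linarith)
  rw [← sum_range_sub_one_mul_pow]
  gcongr with j
  rw [le_sub_iff_add_le]
  exact_mod_cast ha j

theorem mul_repeatingValue [NeZero q] (hd : 2 ≤ d) (a : ZMod q → ℕ) :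
    d * repeatingValue d q a = a 0 + repeatingValue d q fun j => a (j + 1) := by
  have hden : (d : ℝ) ^ q - 1 ≠ 0 :=
    sub_ne_zero.2 (one_lt_pow₀ (by exact_mod_cast hd) (NeZero.ne q)).ne'
  have := mul_sum_range_mul_pow (d : ℝ) (fun j : ℕ => (a j : ℝ)) q
  simp only [CharP.cast_eq_zero, Nat.cast_zero, Nat.cast_succ] at this
  simp only [repeatingValue]
  field_simp
  linarith

theorem sigmad_fract (d : ℕ) (x : ℝ) : sigmad d (Int.fract x) = Int.fract (d * x) := by
  refine Int.fract_eq_fract.2 ⟨-(d * ⌊x⌋), ?_⟩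
  rw [Int.fract]
  push_cast
  ring

theorem sigmad_tuplePoint [NeZero q] (hd : 2 ≤ d) (a : ZMod q → ℕ) :
    sigmad d (tuplePoint d q a) = tuplePoint d q fun j => a (j + 1) := by
  rw [tuplePoint_eq_fract, sigmad_fract, mul_repeatingValue hd, Int.fract_natCast_add,
    tuplePoint_eq_fract]

theorem sigmad_iterate_tuplePoint [NeZero q] (hd : 2 ≤ d) (a : ZMod q → ℕ) (k : ℕ) :
    (sigmad d)^[k] (tuplePoint d q a) = tuplePoint d q fun j => a (j + k) := by
  induction k with
  | zero => simp
  | succ k ih =>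
    rw [Function.iterate_succ_apply', ih, sigmad_tuplePoint hd]
    simp only [Nat.cast_succ, add_assoc, add_comm (1 : ZMod q)]

theorem tuplePoint_eq_repeatingValue (ha : ∀ j, a j < d) (hne : tuplePoint d q a ≠ 0) :
    tuplePoint d q a = repeatingValue d q a := by
  rw [tuplePoint_eq_fract] at hne ⊢
  refine Int.fract_eq_self.2 ⟨repeatingValue_nonneg (Nat.one_le_of_lt (ha 0)) a,
    (repeatingValue_le_one ha).lt_of_ne fun h => hne ?_⟩
  rw [h, Int.fract_one]

theorem mul_tuplePoint [NeZero q] (hd : 2 ≤ d) (ha : ∀ j, a j < d) (hne : tuplePoint d q a ≠ 0)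
    (hne' : tuplePoint d q (fun j => a (j + 1)) ≠ 0) :
    d * tuplePoint d q a = a 0 + tuplePoint d q fun j => a (j + 1) := by
  rw [tuplePoint_eq_repeatingValue ha hne, tuplePoint_eq_repeatingValue (fun j => ha _) hne',
    mul_repeatingValue hd]

end RepeatingExpansions

namespace IsRotational

variable {d q : ℕ}

section

variable {p : ZMod q} {t : ZMod q → ℝ}

theorem isLeast_zero (h : IsRotational d q p t) : IsLeast (Set.range t) (t 0) := by
  refine ⟨⟨0, rfl⟩, ?_⟩
  rintro _ ⟨i, rfl⟩
  rcases eq_or_ne i 0 with rfl | hi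
  · rfl
  · exact (h.2.1 0 i (by simpa [Nat.pos_iff_ne_zero] using hi)).le

theorem sigmad_iterate_zero (h : IsRotational d q p t) (k : ℕ) :
    (sigmad d)^[k] (t 0) = t (k * p) := by
  induction k with
  | zero => simp
  | succ k ih => rw [Function.iterate_succ_apply', ih, h.2.2.2, Nat.cast_succ, add_one_mul]

theorem injective [NeZero q] (h : IsRotational d q p t) : Function.Injective t := fun i j hij =>
  ZMod.val_injective q (by
    by_contra hne
    rcases lt_or_gt_of_ne hne with hlt | hlt
    · exact (h.2.1 i j hlt).ne hij
    · exact (h.2.1 j i hlt).ne' hij)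

theorem ne_zero [NeZero q] (h : IsRotational d q p t) (i : ZMod q) : t i ≠ 0 := fun hi => by
  have hfix : t (i + p) = t i := by rw [← h.2.2.2 i, hi, sigmad, mul_zero, Int.fract_zero]
  exact h.2.2.1 (by simpa using h.injective hfix)

end

variable [NeZero q] {p : ℕ} {t t' : ZMod q → ℝ}

theorem range_eq_sigmaOrbit (hpq : p.Coprime q) (h : IsRotational d q p t) :
    Set.range t = sigmaOrbit d (t 0) := by
  rw [← (natCast_mul_surjective hpq).range_comp t]
  exact congrArg Set.range (funext fun k => (h.sigmad_iterate_zero k).symm)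

theorem eq_of_range_eq (hpq : p.Coprime q) (h : IsRotational d q p t)
    (h' : IsRotational d q p t') (hrange : Set.range t = Set.range t') : t = t' := by
  have h0 : t 0 = t' 0 := h.isLeast_zero.unique (hrange ▸ h'.isLeast_zero)
  refine (natCast_mul_surjective hpq).injective_comp_right (funext fun k => ?_)
  simp only [Function.comp_apply]
  rw [← h.sigmad_iterate_zero, h0, h'.sigmad_iterate_zero]

theorem mul_eq_digit_add (hd : 2 ≤ d) (hpq : p.Coprime q) (h : IsRotational d q p t)
    {a : ZMod q → ℕ} (ha : ∀ j, a j < d) (hleast : IsLeast (Set.range t) (tuplePoint d q a))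
    (i : ZMod q) : d * t i = a (i * (p : ZMod q)⁻¹) + t (i + p) := by
  have hshift (k : ℕ) : tuplePoint d q (fun j => a (j + k)) = t (k * p) := by
    rw [← sigmad_iterate_tuplePoint hd, hleast.unique h.isLeast_zero, h.sigmad_iterate_zero]
  obtain ⟨k, rfl⟩ := natCast_mul_surjective hpq i
  have hdigit : (k * p : ZMod q) * (p : ZMod q)⁻¹ = k := by
    rw [mul_assoc, ZMod.coe_mul_inv_eq_one p hpq, mul_one]
  have hnext : tuplePoint d q (fun j => a (j + 1 + k)) = t (k * p + p) := by
    rw [← add_one_mul, ← Nat.cast_succ, ← hshift]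
    simp only [Nat.cast_succ, add_assoc, add_comm (1 : ZMod q)]
  have := mul_tuplePoint (a := fun j : ZMod q => a (j + k)) hd (fun j => ha _)
    (by rw [hshift]; exact h.ne_zero _) (by rw [hnext]; exact h.ne_zero _)
  simpa only [hshift, hnext, hdigit, zero_add] using this

end IsRotational

section Normalization

variable {q : ℕ} [NeZero q]

theorem strictMono_zmodLift_iff {t : ZMod q → ℝ} :
    StrictMono (zmodLift 1 t) ∧ 0 ≤ zmodLift 1 t 0 ∧ zmodLift 1 t (-1) < 0 ↔
      (∀ i, t i ∈ Set.Ico 0 1) ∧ ∀ i j : ZMod q, i.val < j.val → t i < t j := by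
  have hlast : zmodLift 1 t (-1) = zmodLift 1 t (q - 1) - 1 := apply_neg_one_eq _
  have hq : 1 ≤ q := NeZero.one_le
  constructor
  · rintro ⟨hX, h0, h1⟩
    refine ⟨fun i => ?_, fun i j hij => ?_⟩
    · have hi := i.val_lt
      have hlow := hX.monotone (Int.natCast_nonneg i.val)
      have hupp := hX.monotone (show (i.val : ℤ) ≤ q - 1 by omega)
      rw [zmodLift_val] at hlow hupp
      exact ⟨by linarith, by linarith⟩
    · simpa only [zmodLift_val] using hX (Int.ofNat_lt.2 hij)
  · rintro ⟨hmem, hlt⟩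
    have h0 : 0 ≤ zmodLift 1 t 0 := by
      rw [zmodLift_of_mem_Ico _ _ ⟨le_rfl, by omega⟩]
      exact (hmem _).1
    have h1 : zmodLift 1 t (-1) < 0 := by
      rw [hlast, zmodLift_of_mem_Ico _ _ ⟨by omega, by omega⟩]
      exact sub_neg.2 (hmem _).2
    refine ⟨strictMono_of_strictMonoOn_Ico (fun i hi j hj hij => ?_) (h1.trans_le h0), h0, h1⟩
    rw [zmodLift_of_mem_Ico _ _ hi, zmodLift_of_mem_Ico _ _ hj]
    refine hlt _ _ (Int.ofNat_lt.1 ?_)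
    rwa [ZMod.val_intCast, ZMod.val_intCast, Int.emod_eq_of_lt hi.1 hi.2,
      Int.emod_eq_of_lt hj.1 hj.2]

theorem sigmad_eq_iff_exists_lift {d p : ℕ} {t : ZMod q → ℝ} (ht : ∀ i, t i ∈ Set.Ico 0 1) :
    (∀ i, sigmad d (t i) = t (i + p)) ↔
      ∃ B : ℤ → ℤ, ∀ k, d * zmodLift 1 t k = B k + zmodLift 1 t (k + p) := by
  simp only [sigmad, Int.fract_eq_iff, (ht _).1, (ht _).2, true_and]
  constructor
  · intro h
    choose z hz using h
    refine ⟨fun k => z k + d * (k / q) - (k + p) / q, fun k => ?_⟩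
    simp only [zmodLift_apply, zsmul_eq_mul, Int.cast_add, Int.cast_natCast]
    push_cast
    linarith [hz k]
  · rintro ⟨B, hB⟩ i
    refine ⟨B i.val + (i.val + p) / q, ?_⟩
    have := hB i.val
    rw [zmodLift_val, zmodLift_apply] at this
    simp only [zsmul_eq_mul, Int.cast_add, Int.cast_natCast, ZMod.natCast_zmod_val] at this
    push_cast
    linarith

theorem isRotational_iff_lift {d p : ℕ} (hp : (p : ZMod q) ≠ 0) {t : ZMod q → ℝ} :
    IsRotational d q p t ↔
      (StrictMono (zmodLift 1 t) ∧ 0 ≤ zmodLift 1 t 0 ∧ zmodLift 1 t (-1) < 0) ∧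
        ∃ B : ℤ → ℤ, ∀ k, d * zmodLift 1 t k = B k + zmodLift 1 t (k + p) := by
  rw [strictMono_zmodLift_iff, IsRotational]
  constructor
  · rintro ⟨hmem, hlt, -, hrot⟩
    exact ⟨⟨hmem, hlt⟩, (sigmad_eq_iff_exists_lift hmem).1 hrot⟩
  · rintro ⟨⟨hmem, hlt⟩, hB⟩
    exact ⟨hmem, hlt, hp, (sigmad_eq_iff_exists_lift hmem).2 hB⟩

end Normalization

section RepresentativeSequence

variable {q : ℕ} [NeZero q]

/-- The extension of a finite sequence `s` to `ℤ` with `s (k + q) = s k + (d - 1)`. -/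
def seqLift (d : ℕ) (s : Fin q → ℕ) : ℤ →+c[(q : ℤ), (d - 1 : ℤ)] ℤ :=
  zmodLift (d - 1 : ℤ) fun i => s ⟨i.val, i.val_lt⟩

variable {d p : ℕ} {s s' : Fin q → ℕ} {t t' : ZMod q → ℝ}

theorem seqLift_val (d : ℕ) (s : Fin q → ℕ) (k : Fin q) : seqLift d s k = s k := by
  rw [seqLift, zmodLift_natCast _ _ k.isLt]
  simp only [ZMod.val_cast_of_lt k.isLt]

theorem seqLift_injective (d : ℕ) : Function.Injective (seqLift (q := q) d) := fun s s' h =>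
  funext fun k => by
    have := congrArg (fun f : ℤ →+c[(q : ℤ), (d - 1 : ℤ)] ℤ => f k) h
    simpa only [seqLift_val, Nat.cast_inj] using this

theorem monotone_seqLift_iff (hd : 1 ≤ d) :
    Monotone (seqLift d s) ∧ 0 ≤ seqLift d s 0 ∧ seqLift d s (-1) < 0 ↔
      Monotone s ∧ ∀ k, s k < d - 1 := by
  have hlast : seqLift d s (-1) = seqLift d s (q - 1) - (d - 1) := apply_neg_one_eq _
  have hq : 1 ≤ q := NeZero.one_le
  constructor
  · rintro ⟨hB, -, h1⟩
    refine ⟨fun i j hij => ?_, fun k => ?_⟩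
    · have := hB (Int.ofNat_le.2 hij)
      rw [seqLift_val, seqLift_val] at this
      exact_mod_cast this
    · have := hB (show (k : ℤ) ≤ q - 1 by omega)
      rw [seqLift_val] at this
      omega
  · rintro ⟨hs, hlt⟩
    have hval (k : ℤ) (hk : k ∈ Set.Ico (0 : ℤ) q) :
        seqLift d s k = s ⟨k.toNat, by grind⟩ := by
      rw [← seqLift_val d, Int.toNat_of_nonneg hk.1]
    have h0 : 0 ≤ seqLift d s 0 := by
      rw [hval 0 ⟨le_rfl, by omega⟩]
      exact Int.natCast_nonneg _
    have h1 : seqLift d s (-1) < 0 := by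
      rw [hlast, hval _ ⟨by omega, by omega⟩]
      have := hlt ⟨(q - 1 : ℤ).toNat, by omega⟩
      omega
    refine ⟨monotone_of_monotoneOn_Ico (fun i hi j hj hij => ?_) (h1.le.trans h0), h0, h1⟩
    rw [hval i hi, hval j hj]
    exact Int.ofNat_le.2 (hs (Int.toNat_le_toNat hij))

theorem exists_seqLift_eq {B : ℤ →+c[(q : ℤ), (d - 1 : ℤ)] ℤ} (hB : Monotone B) (h0 : 0 ≤ B 0) :
    ∃ s : Fin q → ℕ, seqLift d s = B := by
  refine ⟨fun k => (B k).toNat, .trans ?_ (zmodLift_restrict B)⟩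
  refine congrArg (zmodLift (d - 1 : ℤ)) (funext fun i => ?_)
  exact Int.toNat_of_nonneg (h0.trans (hB (Int.natCast_nonneg _)))

/-- `s` is the representative sequence of the rotational set listed by `t`: for `0 ≤ k < q`, the
term `s k` is the integer by which `d * t k` exceeds the term `k + p` of the lift of `t`, which is
`t (k + p)` for `k < q - p` and, after wrapping around, `t (k + p) + 1` for `k ≥ q - p`. -/
def Represents (d p : ℕ) (s : Fin q → ℕ) (t : ZMod q → ℝ) : Prop :=
  ∀ k : ℤ, d * zmodLift 1 t k = seqLift d s k + zmodLift 1 t (k + p)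

theorem IsRotational.exists_represents (hd : 1 ≤ d) (hp1 : 1 ≤ p) (hp2 : p < q)
    (h : IsRotational d q p t) :
    ∃ s : Fin q → ℕ, (Monotone s ∧ ∀ k, s k < d - 1) ∧ Represents d p s t := by
  obtain ⟨⟨hX, hnorm⟩, B, hB⟩ := (isRotational_iff_lift h.2.2.1).1 h
  have hmono := monotone_of_strictMono_lift hd hB hX
  have hsign := (lift_normalized_iff hd hp1 hp2 hB hX).1 hnorm
  obtain ⟨s, hs⟩ := exists_seqLift_eq (B := ⟨B, map_add_const_of_lift hB⟩) hmono hsign.1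
  have hsB : ⇑(seqLift d s) = B := congrArg _ hs
  exact ⟨s, (monotone_seqLift_iff hd).1 (hsB ▸ ⟨hmono, hsign⟩), fun k => hsB ▸ hB k⟩

theorem exists_isRotational_represents (hd : 2 ≤ d) (hp1 : 1 ≤ p) (hp2 : p < q)
    (hpq : p.Coprime q) (hs : Monotone s ∧ ∀ k, s k < d - 1) :
    ∃ t : ZMod q → ℝ, IsRotational d q p t ∧ Represents d p s t := by
  obtain ⟨hmono, hsign⟩ := (monotone_seqLift_iff (by omega)).2 hs
  obtain ⟨X, hX⟩ := exists_lift hd p (seqLift d s)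
  have hstrict := strictMono_lift_of_monotone hd hpq hX hmono
  have hnorm := (lift_normalized_iff (by omega) hp1 hp2 hX hstrict).2 hsign
  have hp : (p : ZMod q) ≠ 0 := fun h =>
    Nat.not_dvd_of_pos_of_lt hp1 hp2 ((ZMod.natCast_eq_zero_iff p q).1 h)
  refine ⟨fun i => X i.val, ?_⟩
  rw [isRotational_iff_lift hp, Represents, zmodLift_restrict]
  exact ⟨⟨⟨hstrict, hnorm⟩, _, hX⟩, hX⟩

theorem Represents.sequence_unique (h : Represents d p s t) (h' : Represents d p s' t) :
    s = s' := by
  refine seqLift_injective d (DFunLike.ext _ _ fun k => ?_)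
  have := (h k).symm.trans (h' k)
  exact_mod_cast add_right_cancel this

theorem Represents.points_unique (hd : 2 ≤ d) (h : Represents d p s t)
    (h' : Represents d p s t') : t = t' := by
  have := lift_eq_of_eq hd h h'
  exact funext fun i => by rw [← zmodLift_val 1 t, this, zmodLift_val]

theorem Represents.repDigit_eq (hd : 2 ≤ d) (hp2 : p < q) (hpq : p.Coprime q)
    (hrep : Represents d p s t) (h : IsRotational d q p t) {a : ZMod q → ℕ} (ha : ∀ j, a j < d)
    (hleast : IsLeast (Set.range t) (tuplePoint d q a)) (k : Fin q) :
    repDigit q p a k = s k := by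
  have hdigit := h.mul_eq_digit_add hd hpq ha hleast (k : ℕ)
  have hk := hrep k
  rw [zmodLift_natCast _ _ k.isLt, seqLift_val, zmodLift_apply] at hk
  simp only [zsmul_eq_mul, mul_one, Int.cast_add, Int.cast_natCast] at hk
  have hak : (a ((k : ℕ) * (p : ZMod q)⁻¹) : ℤ) = s k + (k + p : ℤ) / q := by
    have : (a ((k : ℕ) * (p : ZMod q)⁻¹) : ℝ) = s k + ((k + p : ℤ) / q : ℤ) := by linarith
    exact_mod_cast this
  have hkq := k.isLt
  rw [repDigit]
  split_ifs with hle
  · rw [Int.ediv_eq_zero_of_lt (by omega) (by omega)] at hak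
    omega
  · rw [show (k + p : ℤ) / q = 1 from Int.ediv_eq_iff_of_pos (by omega) |>.2 (by omega)] at hak
    omega

end RepresentativeSequence

/-- The `σ_d`-rotational orbits with rotation number `p/q`. -/
abbrev RotationalOrbit (d q : ℕ) (p : ZMod q) : Type :=
  {O : Set ℝ // (∃ x : ℝ, O = sigmaOrbit d x) ∧
    ∃ t : ZMod q → ℝ, Set.range t = O ∧ IsRotational d q p t}

theorem exists_bijective_represents {d q p : ℕ} [NeZero q] (hd : 2 ≤ d) (hp1 : 1 ≤ p)
    (hp2 : p < q) (hpq : p.Coprime q) :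
    ∃ f : RotationalOrbit d q p → {s : Fin q → ℕ // Monotone s ∧ ∀ k, s k < d - 1},
      Function.Bijective f ∧ ∀ O, ∃ t : ZMod q → ℝ,
        Set.range t = O.1 ∧ IsRotational d q p t ∧ Represents d p (f O).1 t := by
  choose t hrange hrot using fun O : RotationalOrbit d q p => O.2.2
  choose s hs hrep using fun O => (hrot O).exists_represents (by omega) hp1 hp2
  refine ⟨fun O => ⟨s O, hs O⟩, ⟨fun O O' h => ?_, ?_⟩, fun O => ⟨t O, hrange O, hrot O, hrep O⟩⟩
  · have hss : s O = s O' := congrArg Subtype.val h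
    have htt : t O = t O' := (hrep O).points_unique hd (hss ▸ hrep O')
    exact Subtype.ext (by rw [← hrange, ← hrange, htt])
  · rintro ⟨s', hs'⟩
    obtain ⟨t', hrot', hrep'⟩ := exists_isRotational_represents hd hp1 hp2 hpq hs'
    let O : RotationalOrbit d q p :=
      ⟨Set.range t', ⟨t' 0, hrot'.range_eq_sigmaOrbit hpq⟩, t', rfl, hrot'⟩
    have htt : t O = t' := (hrot O).eq_of_range_eq hpq hrot' (hrange O)
    exact ⟨O, Subtype.ext ((hrep O).sequence_unique (htt ▸ hrep'))⟩

theorem stmt11 (d q p : ℕ) (hd : 2 ≤ d) (hq : 2 ≤ q)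
    (hp1 : 1 ≤ p) (hp2 : p ≤ q - 1) (hpq : Nat.gcd p q = 1) :
    -- there is a bijection `f` from the set of `σ_d`-rotational orbits with rotation
    -- number `p/q` onto the set of `(d-1)`-sequences of length `q`, sending each orbit
    -- to its representative sequence; in particular the number of such orbits is
    -- `C(d-2+q, d-2)`
    (∃ f : {O : Set ℝ // (∃ x : ℝ, O = sigmaOrbit d x) ∧
            ∃ t : ZMod q → ℝ, Set.range t = O ∧ IsRotational d q ((p : ℕ) : ZMod q) t} →
          {s : Fin q → ℕ // Monotone s ∧ ∀ k, s k < d - 1},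
        Function.Bijective f ∧
        ∀ (O : {O : Set ℝ // (∃ x : ℝ, O = sigmaOrbit d x) ∧
            ∃ t : ZMod q → ℝ, Set.range t = O ∧ IsRotational d q ((p : ℕ) : ZMod q) t})
          (a : ZMod q → ℕ), (∀ j, a j < d) →
          tuplePoint d q a ∈ O.1 → (∀ x ∈ O.1, tuplePoint d q a ≤ x) →
          ∀ k : Fin q, (f O).1 k = repDigit q p a k.val) ∧
    Nat.card {O : Set ℝ // (∃ x : ℝ, O = sigmaOrbit d x) ∧
        ∃ t : ZMod q → ℝ, Set.range t = O ∧ IsRotational d q ((p : ℕ) : ZMod q) t} =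
      (d - 2 + q).choose (d - 2) := by
  have : NeZero q := ⟨by omega⟩
  have hp_lt : p < q := by omega
  obtain ⟨f, hf, hrep⟩ := exists_bijective_represents hd hp1 hp_lt hpq
  refine ⟨⟨f, hf, fun O a ha hmem hle k => ?_⟩, ?_⟩
  · obtain ⟨t, hrange, hrot, hrep⟩ := hrep O
    exact (hrep.repDigit_eq hd hp_lt hpq hrot ha (hrange ▸ ⟨hmem, hle⟩) k).symm
  · rw [Nat.card_eq_of_bijective f hf, natCard_monotone_lt, Nat.multichoose_eq,
      show d - 1 + q - 1 = d - 2 + q by omega, Nat.choose_symm_add]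
end
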